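/- Let P ⊆ ℝ^d be a d-dimensional simplicial reflexive polytope, F a facet of P and v ∈ H_P(F,0) a vertex of P with ⟨u_F, v⟩ = 0. Then: (1) for every w ∈ 𝒱(F), v equals the neighboring vertex n(F,w) if and only if ⟨u_F^w, v⟩ < 0; in particular, for every w ∈ 𝒱(F) there is at most one vertex v' ∈ H_P(F,0) with ⟨u_F^w, v'⟩ < 0; (2) if v is contained in precisely one neighboring facet N(F,w) of F, then v ≁ w and v + w is a lattice point of F. -/

import Mathlib

noncomputable section

/-- The standard inner product on `ℝ^d`. -/
def dotp {d : ℕ} (x y : Fin d → ℝ) : ℝ := ∑ i, x i * y i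

/-- `x` is a point of the lattice `ℤ^d`. -/
def IsLP {d : ℕ} (x : Fin d → ℝ) : Prop := ∀ i, ∃ n : ℤ, x i = (n : ℝ)

/-- A lattice polytope: convex hull of finitely many lattice points. -/
def IsLatticePolytope {d : ℕ} (P : Set (Fin d → ℝ)) : Prop :=
  ∃ V : Finset (Fin d → ℝ), (∀ v ∈ V, IsLP v) ∧ P = convexHull ℝ (V : Set (Fin d → ℝ))

/-- The dual polytope `P* = {x | ⟨x,y⟩ ≤ 1 ∀ y ∈ P}`. -/
def dualPolytope {d : ℕ} (P : Set (Fin d → ℝ)) : Set (Fin d → ℝ) :=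
  {x | ∀ y ∈ P, dotp x y ≤ 1}

/-- `P` is a reflexive polytope: a (`d`-dimensional) lattice polytope with `0` in its
interior whose dual is again a lattice polytope. -/
def IsReflexive {d : ℕ} (P : Set (Fin d → ℝ)) : Prop :=
  IsLatticePolytope P ∧ (0 : Fin d → ℝ) ∈ interior P ∧ IsLatticePolytope (dualPolytope P)

/-- `F` is a facet of `P` with (uniquely determined) outer normal `u`, normalized by
`⟨u, F⟩ = 1` (possible since `0` is in the interior of `P`). -/
def IsFacetNormal {d : ℕ} (P F : Set (Fin d → ℝ)) (u : Fin d → ℝ) : Prop :=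
  F.Nonempty ∧ (∀ y ∈ P, dotp u y ≤ 1) ∧ F = {y ∈ P | dotp u y = 1} ∧
    Module.finrank ℝ (vectorSpan ℝ F) = d - 1

/-- `F` is a facet of `P`. -/
def IsFacet {d : ℕ} (P F : Set (Fin d → ℝ)) : Prop := ∃ u, IsFacetNormal P F u

/-- `P` is simplicial: every facet has exactly `d` vertices. -/
def IsSimplicial {d : ℕ} (P : Set (Fin d → ℝ)) : Prop :=
  ∀ F, IsFacet P F → (Set.extremePoints ℝ F).ncard = d

/-- `F'` is the neighboring facet `N(F,w)`: a facet different from `F` containing all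
vertices of `F` except `w`. -/
def NbrFacet {d : ℕ} (P F : Set (Fin d → ℝ)) (w : Fin d → ℝ) (F' : Set (Fin d → ℝ)) : Prop :=
  IsFacet P F' ∧ F' ≠ F ∧ Set.extremePoints ℝ F \ {w} ⊆ F'

/-- `v'` is the neighboring vertex `n(F,w)`: the vertex of the neighboring facet `N(F,w)`
not contained in `F`. -/
def NbrVertex {d : ℕ} (P F : Set (Fin d → ℝ)) (w v' : Fin d → ℝ) : Prop :=
  ∃ F', NbrFacet P F w F' ∧ v' ∈ Set.extremePoints ℝ F' ∧ v' ∉ F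

/-! Let `f w = u_F^w`, for `w ∈ 𝒱(F)`, be the dual basis. The normal of a neighboring facet
`N(F,w)` agrees with `u` on all vertices of `F` but `w`, hence equals `u + c • f w` with `c < 0`;
conversely, tilting `u` in the direction `-f w` until the hyperplane meets a further vertex produces
such a facet. Reflexivity makes facet normals integral, so a vertex `v` with `⟨u, v⟩ = 0` and
`⟨f w, v⟩ < 0` pairs to a positive integer `≤ 1` with the normal of `N(F,w)` and lies on it.

If no vertex `w' ≠ w` of `F` has `⟨f w', v⟩ < 0`, then every `y ∈ P*` with `⟨y, w⟩ = 1` satisfies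
`⟨y, v⟩ = ∑ ⟨y, w'⟩ ⟨f w', v⟩ ≤ ∑ ⟨f w', v⟩ = ⟨u, v⟩ = 0`. So no `y ∈ P*` takes the value `1` on
both `v` and `w`: they share no facet, and the vertices of `P*`, being integral, are at most `1` on
`v + w`, which puts `v + w` into `P** = P`. -/

open Module Submodule

section LinearAlgebra

theorem finrank_span_eq_finrank_vectorSpan_add_one {K V : Type*} [Field K] [AddCommGroup V]
    [Module K V] [Module.Finite K V] {s : Set V} (hs : s.Nonempty) {f : Dual K V}
    (hf : ∀ x ∈ s, f x = 1) : finrank K (span K s) = finrank K (vectorSpan K s) + 1 := by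
  obtain ⟨p, hp⟩ := hs
  have hker : vectorSpan K s ≤ LinearMap.ker f := by
    rw [vectorSpan_def, span_le]
    rintro _ ⟨x, hx, y, hy, rfl⟩
    simp [hf x hx, hf y hy]
  have hpker : p ∉ vectorSpan K s := fun h => by simpa [hf p hp] using hker h
  have hspan : vectorSpan K s ⊔ span K {p} = span K s := by
    refine le_antisymm (sup_le ?_ (span_mono (Set.singleton_subset_iff.2 hp)))
      (span_le.2 fun x hx => ?_)
    · rw [vectorSpan_def, span_le]
      rintro _ ⟨x, hx, y, hy, rfl⟩
      exact sub_mem (subset_span hx) (subset_span hy)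
    · rw [← sub_add_cancel x p]
      exact add_mem (mem_sup_left (vsub_mem_vectorSpan K hx hp))
        (mem_sup_right (mem_span_singleton_self p))
  rw [← hspan, finrank_sup_span_singleton hpker]

variable {ι K : Type*} [Fintype ι] [Field K] {S : Set (ι → K)}

theorem eq_of_forall_dotProduct_eq (hS : span K S = ⊤) {x y : ι → K}
    (h : ∀ s ∈ S, x ⬝ᵥ s = y ⬝ᵥ s) : x = y := by
  classical
  exact (dotProductEquiv K ι).injective (LinearMap.ext_on hS h)

theorem span_eq_top_of_forall_dotProduct_eq_zero
    (h : ∀ z : ι → K, (∀ s ∈ S, z ⬝ᵥ s = 0) → z = 0) : span K S = ⊤ := by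
  classical
  by_contra hne
  obtain ⟨g, hg, hSg⟩ := exists_le_ker_of_lt_top _ (lt_top_iff_ne_top.2 hne)
  obtain ⟨z, rfl⟩ := (dotProductEquiv K ι).surjective g
  exact hg (by rw [h z fun s hs => hSg (subset_span hs), map_zero])

/-- The vectors `f w`, for `w ∈ S`, are dual to the vectors of `S` with respect to the dot product.
If `S` is a basis, this is its dual basis `w ↦ u_F^w`; the values of `f` off `S` are irrelevant. -/
def IsDualFamily (S : Set (ι → K)) (f : (ι → K) → ι → K) : Prop :=
  ∀ w ∈ S, f w ⬝ᵥ w = 1 ∧ ∀ w' ∈ S, w' ≠ w → f w ⬝ᵥ w' = 0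

namespace IsDualFamily

variable {f : (ι → K) → ι → K} {w x y : ι → K}

theorem eq_add_smul (hf : IsDualFamily S f) (hS : span K S = ⊤) (hw : w ∈ S)
    (h : ∀ w' ∈ S, w' ≠ w → x ⬝ᵥ w' = y ⬝ᵥ w') : x = y + (x ⬝ᵥ w - y ⬝ᵥ w) • f w := by
  refine eq_of_forall_dotProduct_eq hS fun w' hw' => ?_
  rw [add_dotProduct, smul_dotProduct, smul_eq_mul]
  by_cases hne : w' = w
  · rw [hne, (hf w hw).1]
    ring
  · rw [(hf w hw).2 w' hw' hne, h w' hw' hne]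
    ring

theorem span_insert_sdiff_singleton (hf : IsDualFamily S f) (hS : span K S = ⊤) (hw : w ∈ S)
    (hx : f w ⬝ᵥ x ≠ 0) : span K (insert x (S \ {w})) = ⊤ := by
  refine span_eq_top_of_forall_dotProduct_eq_zero fun z hz => ?_
  have hzw : z = (z ⬝ᵥ w) • f w := by
    simpa using hf.eq_add_smul hS hw (x := z) (y := 0) fun w' hw' hne => by
      rw [hz w' (.inr ⟨hw', hne⟩), zero_dotProduct]
  have hzx : z ⬝ᵥ w * f w ⬝ᵥ x = 0 := by
    rw [← smul_eq_mul, ← smul_dotProduct, ← hzw]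
    exact hz x (.inl rfl)
  rw [hzw, (mul_eq_zero.1 hzx).resolve_right hx, zero_smul]

theorem dotProduct_eq_sum {S : Finset (ι → K)} (hf : IsDualFamily (S : Set (ι → K)) f)
    (hS : span K (S : Set (ι → K)) = ⊤) (x y : ι → K) :
    y ⬝ᵥ x = ∑ w ∈ S, y ⬝ᵥ w * f w ⬝ᵥ x := by
  have hy : y = ∑ w ∈ S, (y ⬝ᵥ w) • f w := by
    refine eq_of_forall_dotProduct_eq hS fun w hw => ?_
    rw [sum_dotProduct, Finset.sum_eq_single_of_mem w hw fun w' hw' hne => by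
      rw [smul_dotProduct, (hf w' hw').2 w hw hne.symm, smul_zero]]
    rw [smul_dotProduct, (hf w hw).1, smul_eq_mul, mul_one]
  conv_lhs => rw [hy, sum_dotProduct]
  simp only [smul_dotProduct, smul_eq_mul]

end IsDualFamily

end LinearAlgebra

theorem exists_pos_sub_mul_le_and_eq {α K : Type*} [Field K] [LinearOrder K] [IsStrictOrderedRing K]
    {V : Finset α} {a g : α → K} {c : K} (ha : ∀ x ∈ V, a x ≤ c)
    (hag : ∀ x ∈ V, g x < 0 → a x < c) (hg : ∃ x ∈ V, g x < 0) :
    ∃ t > 0, (∀ x ∈ V, a x - t * g x ≤ c) ∧ ∃ x ∈ V, g x < 0 ∧ a x - t * g x = c := by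
  classical
  obtain ⟨x₀, hx₀, hmin⟩ := ({x ∈ V | g x < 0} : Finset α).exists_min_image
    (fun x => (c - a x) / -g x) (by simpa [Finset.Nonempty] using hg)
  obtain ⟨hx₀V, hgx₀⟩ := Finset.mem_filter.1 hx₀
  have ht : 0 < (c - a x₀) / -g x₀ := div_pos (sub_pos.2 (hag x₀ hx₀V hgx₀)) (neg_pos.2 hgx₀)
  refine ⟨_, ht, fun x hx => ?_, x₀, hx₀V, hgx₀, ?_⟩
  · rcases lt_or_ge (g x) 0 with hgx | hgx
    · have := hmin x (Finset.mem_filter.2 ⟨hx, hgx⟩)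
      rw [le_div_iff₀ (neg_pos.2 hgx)] at this
      linarith
    · linarith [ha x hx, mul_nonneg ht.le hgx]
  · have := hgx₀.ne
    field_simp
    ring

section Convexity

variable {ι : Type*} [Fintype ι] {s : Set (ι → ℝ)} {u x : ι → ℝ}

theorem exists_dotProduct_le_of_mem_convexHull (hx : x ∈ convexHull ℝ s) :
    ∃ y ∈ s, u ⬝ᵥ y ≤ u ⬝ᵥ x := by
  classical
  exact ((dotProductEquiv ℝ ι u).concaveOn (convex_convexHull ℝ s)).exists_le_of_mem_convexHull
    (subset_convexHull ℝ s) hx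

theorem exists_le_dotProduct_of_mem_convexHull (hx : x ∈ convexHull ℝ s) :
    ∃ y ∈ s, u ⬝ᵥ x ≤ u ⬝ᵥ y := by
  classical
  exact ((dotProductEquiv ℝ ι u).convexOn (convex_convexHull ℝ s)).exists_ge_of_mem_convexHull
    (subset_convexHull ℝ s) hx

theorem isExposed_setOf_dotProduct_eq {c : ℝ} (h : ∀ y ∈ s, u ⬝ᵥ y ≤ c) :
    IsExposed ℝ s {y ∈ s | u ⬝ᵥ y = c} := by
  classical
  rintro ⟨z, hzs, hz⟩
  refine ⟨(dotProductEquiv ℝ ι u).toContinuousLinearMap, Set.ext fun y => and_congr_right fun hy =>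
    ⟨fun hyc x hx => (h x hx).trans_eq hyc.symm, fun hmax => (h y hy).antisymm ?_⟩⟩
  exact hz.symm.trans_le (hmax z hzs)

end Convexity

section Lattice

variable {d : ℕ} {P : Set (Fin d → ℝ)} {x y : Fin d → ℝ}

theorem dotp_eq_dotProduct (x y : Fin d → ℝ) : dotp x y = x ⬝ᵥ y := rfl

theorem IsLP.add (hx : IsLP x) (hy : IsLP y) : IsLP (x + y) := fun i => by
  obtain ⟨a, ha⟩ := hx i
  obtain ⟨b, hb⟩ := hy i
  exact ⟨a + b, by simp [ha, hb]⟩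

theorem IsLP.exists_dotProduct_eq_intCast (hx : IsLP x) (hy : IsLP y) : ∃ n : ℤ, x ⬝ᵥ y = n := by
  choose a ha using hx
  choose b hb using hy
  exact ⟨∑ i, a i * b i, by simp [dotProduct, ha, hb]⟩

theorem IsLP.dotProduct_nonpos_of_lt_one (hx : IsLP x) (hy : IsLP y) (h : x ⬝ᵥ y < 1) :
    x ⬝ᵥ y ≤ 0 := by
  obtain ⟨n, hn⟩ := hx.exists_dotProduct_eq_intCast hy
  rw [hn] at h ⊢
  exact_mod_cast Int.lt_add_one_iff.1 (by exact_mod_cast h : n < 0 + 1)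

namespace IsLatticePolytope

theorem isCompact (hP : IsLatticePolytope P) : IsCompact P := by
  obtain ⟨V, -, rfl⟩ := hP
  exact V.finite_toSet.isCompact_convexHull ℝ

theorem convex (hP : IsLatticePolytope P) : Convex ℝ P := by
  obtain ⟨V, -, rfl⟩ := hP
  exact convex_convexHull ℝ _

theorem isLP_of_mem_extremePoints (hP : IsLatticePolytope P) (hx : x ∈ P.extremePoints ℝ) :
    IsLP x := by
  obtain ⟨V, hV, rfl⟩ := hP
  exact hV x (extremePoints_convexHull_subset hx)

theorem finite_extremePoints (hP : IsLatticePolytope P) : (P.extremePoints ℝ).Finite := by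
  obtain ⟨V, -, rfl⟩ := hP
  exact V.finite_toSet.subset extremePoints_convexHull_subset

end IsLatticePolytope

theorem mem_of_forall_mem_dualPolytope (hconv : Convex ℝ P) (hclosed : IsClosed P) (h0 : 0 ∈ P)
    (hx : ∀ y ∈ dualPolytope P, y ⬝ᵥ x ≤ 1) : x ∈ P := by
  by_contra hxP
  obtain ⟨g, c, hgP, hgx⟩ := geometric_hahn_banach_closed_point hconv hclosed hxP
  obtain ⟨y, hy⟩ := (dotProductEquiv ℝ (Fin d)).surjective g.toLinearMap
  have hyg (z : Fin d → ℝ) : y ⬝ᵥ z = g z := LinearMap.congr_fun hy z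
  have hc : 0 < c := by simpa using hgP 0 h0
  have hdual : c⁻¹ • y ∈ dualPolytope P := fun z hz => by
    rw [dotp_eq_dotProduct, smul_dotProduct, smul_eq_mul, hyg, inv_mul_le_one₀ hc]
    exact (hgP z hz).le
  have hxc := hx _ hdual
  rw [smul_dotProduct, smul_eq_mul, hyg, inv_mul_le_one₀ hc] at hxc
  exact hgx.not_ge hxc

theorem IsReflexive.add_mem (hP : IsReflexive P) (hx : IsLP x) (hy : IsLP y) (hxP : x ∈ P)
    (hyP : y ∈ P) (hxy : ∀ z ∈ dualPolytope P, z ⬝ᵥ x = 1 → z ⬝ᵥ y ≠ 1) : x + y ∈ P := by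
  obtain ⟨hlattice, h0, V, hV, hdual⟩ := hP
  refine mem_of_forall_mem_dualPolytope hlattice.convex hlattice.isCompact.isClosed
    (interior_subset h0) fun z hz => ?_
  obtain ⟨z', hz'V, hzz'⟩ := exists_le_dotProduct_of_mem_convexHull (u := x + y) (hdual ▸ hz)
  refine (dotProduct_comm z _).trans_le (hzz'.trans ?_)
  rw [dotProduct_comm, dotProduct_add]
  have hz' : z' ∈ dualPolytope P := hdual ▸ subset_convexHull ℝ _ hz'V
  have hx1 : z' ⬝ᵥ x ≤ 1 := hz' x hxP
  have hy1 : z' ⬝ᵥ y ≤ 1 := hz' y hyP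
  rcases hx1.lt_or_eq with hlt | heq
  · linarith [(hV z' hz'V).dotProduct_nonpos_of_lt_one hx hlt]
  · linarith [(hV z' hz'V).dotProduct_nonpos_of_lt_one hy (hy1.lt_of_ne (hxy z' hz' heq))]

end Lattice

section Facets

variable {d : ℕ} {P F F' : Set (Fin d → ℝ)} {u v w x : Fin d → ℝ}
  {f : (Fin d → ℝ) → Fin d → ℝ}

theorem isFacetNormal_of_span_eq_top (hu : u ∈ dualPolytope P)
    (hne : {y ∈ P | u ⬝ᵥ y = 1}.Nonempty) (hspan : span ℝ {y ∈ P | u ⬝ᵥ y = 1} = ⊤) :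
    IsFacetNormal P {y ∈ P | u ⬝ᵥ y = 1} u := by
  have hrank := finrank_span_eq_finrank_vectorSpan_add_one hne
    (f := dotProductEquiv ℝ (Fin d) u) fun y hy => hy.2
  rw [hspan, finrank_top, finrank_fin_fun] at hrank
  exact ⟨hne, hu, rfl, by omega⟩

namespace IsFacetNormal

theorem mem_iff (hF : IsFacetNormal P F u) : x ∈ F ↔ x ∈ P ∧ u ⬝ᵥ x = 1 := by
  rw [hF.2.2.1]
  rfl

theorem dotProduct_le_one (hF : IsFacetNormal P F u) (hx : x ∈ P) : u ⬝ᵥ x ≤ 1 :=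
  hF.2.1 x hx

theorem dotProduct_eq_one (hF : IsFacetNormal P F u) (hx : x ∈ F) : u ⬝ᵥ x = 1 :=
  (hF.mem_iff.1 hx).2

theorem isExposed (hF : IsFacetNormal P F u) : IsExposed ℝ P F := by
  rw [hF.2.2.1]
  exact isExposed_setOf_dotProduct_eq hF.2.1

theorem extremePoints_subset (hF : IsFacetNormal P F u) :
    F.extremePoints ℝ ⊆ P.extremePoints ℝ :=
  hF.isExposed.isExtreme.extremePoints_subset_extremePoints

theorem span_eq_top (hF : IsFacetNormal P F u) : span ℝ F = ⊤ := by
  have hrank := finrank_span_eq_finrank_vectorSpan_add_one hF.1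
    (f := dotProductEquiv ℝ (Fin d) u) fun y => hF.dotProduct_eq_one
  have hle := (span ℝ F).finrank_le
  apply eq_top_of_finrank_eq
  rw [hF.2.2.2] at hrank
  rw [finrank_fin_fun] at hle ⊢
  omega

theorem mem_extremePoints_dualPolytope (hF : IsFacetNormal P F u) :
    u ∈ (dualPolytope P).extremePoints ℝ := by
  refine mem_extremePoints_iff_left.2 ⟨hF.2.1, fun y hy z hz hu => ?_⟩
  refine eq_of_forall_dotProduct_eq hF.span_eq_top fun x hx => ?_
  have hface : IsExposed ℝ (dualPolytope P) {y ∈ dualPolytope P | x ⬝ᵥ y = 1} :=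
    isExposed_setOf_dotProduct_eq fun y hy => by
      rw [dotProduct_comm]
      exact hy x (hF.mem_iff.1 hx).1
  have hux : x ⬝ᵥ u = 1 := by rw [dotProduct_comm, hF.dotProduct_eq_one hx]
  have hyx := (hface.isExtreme.2 hy hz ⟨hF.2.1, hux⟩ hu).2
  rw [dotProduct_comm, hyx, hF.dotProduct_eq_one hx]

theorem isLP (hF : IsFacetNormal P F u) (hP : IsLatticePolytope (dualPolytope P)) : IsLP u :=
  hP.isLP_of_mem_extremePoints hF.mem_extremePoints_dualPolytope

theorem finite_extremePoints (hF : IsFacetNormal P F u) (hP : IsLatticePolytope P) :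
    (F.extremePoints ℝ).Finite :=
  hP.finite_extremePoints.subset hF.extremePoints_subset

theorem convexHull_extremePoints (hF : IsFacetNormal P F u) (hP : IsLatticePolytope P) :
    convexHull ℝ (F.extremePoints ℝ) = F := by
  rw [← ((hF.finite_extremePoints hP).isClosed_convexHull ℝ).closure_eq]
  exact closure_convexHull_extremePoints (hF.isExposed.isCompact hP.isCompact)
    (hF.isExposed.convex hP.convex)

theorem span_extremePoints (hF : IsFacetNormal P F u) (hP : IsLatticePolytope P) :
    span ℝ (F.extremePoints ℝ) = ⊤ := by
  rw [eq_top_iff, ← hF.span_eq_top, span_le]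
  conv_lhs => rw [← hF.convexHull_extremePoints hP]
  exact convexHull_min subset_span (Submodule.convex _)

theorem dotProduct_dual_nonneg (hF : IsFacetNormal P F u) (hP : IsLatticePolytope P)
    (hf : IsDualFamily (F.extremePoints ℝ) f) (hw : w ∈ F.extremePoints ℝ) (hx : x ∈ F) :
    0 ≤ f w ⬝ᵥ x := by
  rw [← hF.convexHull_extremePoints hP] at hx
  obtain ⟨y, hy, hyx⟩ := exists_dotProduct_le_of_mem_convexHull (u := f w) hx
  refine le_trans ?_ hyx
  rcases eq_or_ne y w with rfl | hne
  · exact (hf y hy).1.symm ▸ zero_le_one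
  · exact ((hf w hw).2 y hy hne).ge

theorem dotProduct_le_of_dual_nonneg (hF : IsFacetNormal P F u) (hP : IsLatticePolytope P)
    (hf : IsDualFamily (F.extremePoints ℝ) f)
    (hv : ∀ w' ∈ F.extremePoints ℝ, w' ≠ w → 0 ≤ f w' ⬝ᵥ v)
    {y : Fin d → ℝ} (hy : y ∈ dualPolytope P) (hyw : y ⬝ᵥ w = 1) : y ⬝ᵥ v ≤ u ⬝ᵥ v := by
  obtain ⟨S, hS⟩ := (hF.finite_extremePoints hP).exists_finset_coe
  have hspan := hF.span_extremePoints hP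
  rw [← hS] at hf hspan
  rw [hf.dotProduct_eq_sum hspan v y, hf.dotProduct_eq_sum hspan v u]
  refine Finset.sum_le_sum fun w' hw' => ?_
  have hw'F : w' ∈ F.extremePoints ℝ := hS ▸ hw'
  rw [hF.dotProduct_eq_one hw'F.1]
  rcases eq_or_ne w' w with rfl | hne
  · rw [hyw]
  · exact mul_le_mul_of_nonneg_right (hy w' (hF.extremePoints_subset hw'F).1) (hv w' hw'F hne)

theorem nbrFacet_sub_smul (hF : IsFacetNormal P F u) (hP : IsLatticePolytope P)
    (hf : IsDualFamily (F.extremePoints ℝ) f) (hw : w ∈ F.extremePoints ℝ) {t : ℝ} (ht : t ≠ 0)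
    (hle : u - t • f w ∈ dualPolytope P) (hxP : x ∈ P) (hfx : f w ⬝ᵥ x ≠ 0)
    (hx : (u - t • f w) ⬝ᵥ x = 1) : NbrFacet P F w {y ∈ P | (u - t • f w) ⬝ᵥ y = 1} := by
  have hF' : insert x (F.extremePoints ℝ \ {w}) ⊆ {y ∈ P | (u - t • f w) ⬝ᵥ y = 1} := by
    rintro y (rfl | ⟨hy, hyw⟩)
    · exact ⟨hxP, hx⟩
    · refine ⟨(hF.extremePoints_subset hy).1, ?_⟩
      rw [sub_dotProduct, smul_dotProduct, (hf w hw).2 y hy hyw, hF.dotProduct_eq_one hy.1,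
        smul_zero, sub_zero]
  have hspan := hf.span_insert_sdiff_singleton (hF.span_extremePoints hP) hw hfx
  refine ⟨⟨_, isFacetNormal_of_span_eq_top hle ⟨x, hxP, hx⟩
    (top_unique (hspan.ge.trans (span_mono hF')))⟩, fun heq => ht ?_,
    (Set.subset_insert _ _).trans hF'⟩
  have hw1 : (u - t • f w) ⬝ᵥ w = 1 := (heq.ge hw.1).2
  rw [sub_dotProduct, smul_dotProduct, (hf w hw).1, hF.dotProduct_eq_one hw.1, smul_eq_mul] at hw1
  linarith

theorem exists_nbrFacet (hF : IsFacetNormal P F u) (hP : IsLatticePolytope P)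
    (hf : IsDualFamily (F.extremePoints ℝ) f) (hw : w ∈ F.extremePoints ℝ)
    (hx : ∃ x ∈ P, f w ⬝ᵥ x < 0) : ∃ F', NbrFacet P F w F' := by
  have hlt : ∀ x ∈ P, f w ⬝ᵥ x < 0 → u ⬝ᵥ x < 1 := fun x hxP hneg =>
    (hF.dotProduct_le_one hxP).lt_of_ne fun h1 =>
      hneg.not_ge (hF.dotProduct_dual_nonneg hP hf hw (hF.mem_iff.2 ⟨hxP, h1⟩))
  obtain ⟨V, -, hV⟩ := id hP
  have hVP (x) (hxV : x ∈ V) : x ∈ P := hV ▸ subset_convexHull ℝ _ hxV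
  have hneg : ∃ x ∈ V, f w ⬝ᵥ x < 0 := by
    obtain ⟨x, hxP, hx⟩ := hx
    obtain ⟨y, hyV, hyx⟩ := exists_dotProduct_le_of_mem_convexHull (hV ▸ hxP)
    exact ⟨y, hyV, hyx.trans_lt hx⟩
  obtain ⟨t, ht, hle, x, hxV, hfx, hx⟩ := exists_pos_sub_mul_le_and_eq
    (fun x hx => hF.dotProduct_le_one (hVP x hx)) (fun x hx => hlt x (hVP x hx)) hneg
  have htilt (y) : (u - t • f w) ⬝ᵥ y = u ⬝ᵥ y - t * f w ⬝ᵥ y := by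
    rw [sub_dotProduct, smul_dotProduct, smul_eq_mul]
  refine ⟨_, hF.nbrFacet_sub_smul hP hf hw ht.ne' (fun y hy => ?_) (hVP x hxV) hfx.ne
    ((htilt x).trans hx)⟩
  obtain ⟨z, hzV, hyz⟩ := exists_le_dotProduct_of_mem_convexHull (hV ▸ hy)
  exact hyz.trans ((htilt z).trans_le (hle z hzV))

end IsFacetNormal

namespace NbrFacet

theorem exists_isFacetNormal_add_smul (hN : NbrFacet P F w F') (hP : IsLatticePolytope P)
    (hF : IsFacetNormal P F u) (hf : IsDualFamily (F.extremePoints ℝ) f)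
    (hw : w ∈ F.extremePoints ℝ) : ∃ c < (0 : ℝ), IsFacetNormal P F' (u + c • f w) := by
  obtain ⟨⟨u', hF'⟩, hne, hsub⟩ := hN
  have hu' : u' = u + (u' ⬝ᵥ w - u ⬝ᵥ w) • f w :=
    hf.eq_add_smul (hF.span_extremePoints hP) hw fun w' hw' hw'w => by
      rw [hF'.dotProduct_eq_one (hsub ⟨hw', hw'w⟩), hF.dotProduct_eq_one hw'.1]
  refine ⟨u' ⬝ᵥ w - u ⬝ᵥ w, lt_of_le_of_ne ?_ fun h0 => hne ?_, hu' ▸ hF'⟩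
  · rw [hF.dotProduct_eq_one hw.1, sub_nonpos]
    exact hF'.dotProduct_le_one (hF.extremePoints_subset hw).1
  · rw [h0, zero_smul, add_zero] at hu'
    rw [hF.2.2.1, hF'.2.2.1, hu']

theorem dotProduct_neg_of_mem (hN : NbrFacet P F w F') (hP : IsLatticePolytope P)
    (hF : IsFacetNormal P F u) (hf : IsDualFamily (F.extremePoints ℝ) f)
    (hw : w ∈ F.extremePoints ℝ) (hv : v ∈ F') (hvF : v ∉ F) : f w ⬝ᵥ v < 0 := by
  obtain ⟨c, hc, hF'⟩ := hN.exists_isFacetNormal_add_smul hP hF hf hw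
  obtain ⟨hvP, hv1⟩ := hF'.mem_iff.1 hv
  have hlt : u ⬝ᵥ v < 1 :=
    (hF.dotProduct_le_one hvP).lt_of_ne fun h => hvF (hF.mem_iff.2 ⟨hvP, h⟩)
  rw [add_dotProduct, smul_dotProduct, smul_eq_mul] at hv1
  exact neg_of_mul_pos_right (by linarith) hc.le

theorem mem_of_dotProduct_neg (hN : NbrFacet P F w F') (hP : IsReflexive P)
    (hF : IsFacetNormal P F u) (hf : IsDualFamily (F.extremePoints ℝ) f)
    (hw : w ∈ F.extremePoints ℝ) (hvP : v ∈ P) (hvZ : IsLP v) (hv0 : 0 ≤ u ⬝ᵥ v)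
    (hfv : f w ⬝ᵥ v < 0) : v ∈ F' := by
  obtain ⟨c, hc, hF'⟩ := hN.exists_isFacetNormal_add_smul hP.1 hF hf hw
  have hpos : 0 < (u + c • f w) ⬝ᵥ v := by
    rw [add_dotProduct, smul_dotProduct]
    exact add_pos_of_nonneg_of_pos hv0 (mul_pos_of_neg_of_neg hc hfv)
  refine hF'.mem_iff.2 ⟨hvP, (hF'.dotProduct_le_one hvP).eq_of_not_lt fun hlt => ?_⟩
  exact hpos.not_ge ((hF'.isLP hP.2.2).dotProduct_nonpos_of_lt_one hvZ hlt)

theorem mem_extremePoints (hN : NbrFacet P F w F') (hv : v ∈ F') (hvP : v ∈ P.extremePoints ℝ) :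
    v ∈ F'.extremePoints ℝ := by
  obtain ⟨_, hF'⟩ := hN.1
  exact inter_extremePoints_subset_extremePoints_of_subset hF'.isExposed.subset ⟨hv, hvP⟩

theorem extremePoints_eq_insert (hN : NbrFacet P F w F') (hP : IsLatticePolytope P)
    (hs : IsSimplicial P) (hF : IsFacet P F) (hw : w ∈ F.extremePoints ℝ)
    (hv : v ∈ F'.extremePoints ℝ) (hvF : v ∉ F) :
    F'.extremePoints ℝ = insert v (F.extremePoints ℝ \ {w}) := by
  obtain ⟨u, hFu⟩ := id hF
  obtain ⟨u', hF'u'⟩ := hN.1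
  have hsub : insert v (F.extremePoints ℝ \ {w}) ⊆ F'.extremePoints ℝ :=
    Set.insert_subset hv fun x hx =>
      hN.mem_extremePoints (hN.2.2 hx) (hFu.extremePoints_subset hx.1)
  have hfin := hFu.finite_extremePoints hP
  refine (Set.eq_of_subset_of_ncard_le hsub ?_ (hF'u'.finite_extremePoints hP)).symm
  rw [Set.ncard_insert_of_notMem (fun h => hvF h.1.1) hfin.sdiff,
    Set.ncard_sdiff_singleton_add_one hw hfin, hs F hF, hs F' hN.1]

end NbrFacet

theorem nbrVertex_iff_dotProduct_neg (hP : IsReflexive P) (hF : IsFacetNormal P F u)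
    (hf : IsDualFamily (F.extremePoints ℝ) f) (hw : w ∈ F.extremePoints ℝ)
    (hv : v ∈ P.extremePoints ℝ) (hv0 : u ⬝ᵥ v = 0) : NbrVertex P F w v ↔ f w ⬝ᵥ v < 0 := by
  refine ⟨fun ⟨F', hN, hvF', hvF⟩ => hN.dotProduct_neg_of_mem hP.1 hF hf hw hvF'.1 hvF,
    fun hneg => ?_⟩
  obtain ⟨F', hN⟩ := hF.exists_nbrFacet hP.1 hf hw ⟨v, hv.1, hneg⟩
  have hvF' := hN.mem_of_dotProduct_neg hP hF hf hw hv.1 (hP.1.isLP_of_mem_extremePoints hv)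
    hv0.ge hneg
  refine ⟨F', hN, hN.mem_extremePoints hvF' hv, fun hvF => zero_ne_one (α := ℝ) ?_⟩
  rw [← hv0, hF.dotProduct_eq_one hvF]

theorem eq_of_dotProduct_dual_neg (hP : IsReflexive P) (hs : IsSimplicial P)
    (hF : IsFacetNormal P F u) (hf : IsDualFamily (F.extremePoints ℝ) f)
    (hw : w ∈ F.extremePoints ℝ) {v₁ v₂ : Fin d → ℝ}
    (hv₁ : v₁ ∈ P.extremePoints ℝ) (hv₁0 : u ⬝ᵥ v₁ = 0) (hfv₁ : f w ⬝ᵥ v₁ < 0)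
    (hv₂ : v₂ ∈ P.extremePoints ℝ) (hv₂0 : u ⬝ᵥ v₂ = 0) (hfv₂ : f w ⬝ᵥ v₂ < 0) : v₁ = v₂ := by
  obtain ⟨F', hN, hv₂F', hv₂F⟩ := (nbrVertex_iff_dotProduct_neg hP hF hf hw hv₂ hv₂0).2 hfv₂
  have hv₁F' : v₁ ∈ F'.extremePoints ℝ := hN.mem_extremePoints
    (hN.mem_of_dotProduct_neg hP hF hf hw hv₁.1 (hP.1.isLP_of_mem_extremePoints hv₁) hv₁0.ge hfv₁)
    hv₁
  rw [hN.extremePoints_eq_insert hP.1 hs ⟨u, hF⟩ hw hv₂F' hv₂F] at hv₁F'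
  refine hv₁F'.resolve_right fun hv₁F => hfv₁.not_ge ?_
  exact hF.dotProduct_dual_nonneg hP.1 hf hw hv₁F.1.1

end Facets

/-- for a vertex `v` of `P` with `⟨u_F, v⟩ = 0`:
(1) for `w ∈ 𝒱(F)`, `v = n(F,w)` iff `⟨u_F^w, v⟩ < 0`; in particular for each `w ∈ 𝒱(F)`
there is at most one vertex in `H_P(F,0)` pairing negatively with `u_F^w`;
(2) if `v` lies on precisely one neighboring facet `N(F,w)`, then `v ≁ w` and `v + w` is a
lattice point of `F`. -/
theorem stmt11 {d : ℕ} (P : Set (Fin d → ℝ)) (hP : IsReflexive P) (hs : IsSimplicial P)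
    (F : Set (Fin d → ℝ)) (u : Fin d → ℝ) (hF : IsFacetNormal P F u)
    (uv : (Fin d → ℝ) → (Fin d → ℝ))
    (huv : ∀ w ∈ Set.extremePoints ℝ F, dotp (uv w) w = 1 ∧
      ∀ w' ∈ Set.extremePoints ℝ F, w' ≠ w → dotp (uv w) w' = 0)
    (v : Fin d → ℝ) (hvP : v ∈ Set.extremePoints ℝ P) (hv0 : dotp u v = 0) :
    (∀ w ∈ Set.extremePoints ℝ F, (NbrVertex P F w v ↔ dotp (uv w) v < 0)) ∧
    (∀ w ∈ Set.extremePoints ℝ F, ∀ v₁ v₂ : Fin d → ℝ,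
      v₁ ∈ Set.extremePoints ℝ P → dotp u v₁ = 0 → dotp (uv w) v₁ < 0 →
      v₂ ∈ Set.extremePoints ℝ P → dotp u v₂ = 0 → dotp (uv w) v₂ < 0 → v₁ = v₂) ∧
    (∀ w ∈ Set.extremePoints ℝ F,
      (∃ F', NbrFacet P F w F' ∧ v ∈ F') →
      (∀ w₂ ∈ Set.extremePoints ℝ F, (∃ F₂, NbrFacet P F w₂ F₂ ∧ v ∈ F₂) → w₂ = w) →
      (¬ ∃ G, IsFacet P G ∧ v ∈ G ∧ w ∈ G) ∧ v + w ∈ F ∧ IsLP (v + w)) := by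
  have hiff (w) (hw : w ∈ Set.extremePoints ℝ F) : NbrVertex P F w v ↔ dotp (uv w) v < 0 :=
    nbrVertex_iff_dotProduct_neg hP hF huv hw hvP hv0
  refine ⟨hiff, fun w hw v₁ v₂ => eq_of_dotProduct_dual_neg hP hs hF huv hw,
    fun w hw _ hunique => ?_⟩
  have hnonneg : ∀ w' ∈ Set.extremePoints ℝ F, w' ≠ w → 0 ≤ uv w' ⬝ᵥ v := by
    refine fun w' hw' hne => not_lt.1 fun hneg => hne ?_
    obtain ⟨F', hN, hvF', -⟩ := (hiff w' hw').2 hneg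
    exact hunique w' hw' ⟨F', hN, hvF'.1⟩
  have hsep : ∀ y ∈ dualPolytope P, y ⬝ᵥ v = 1 → y ⬝ᵥ w ≠ 1 := fun y hy hyv hyw => by
    have hle : y ⬝ᵥ v ≤ dotp u v := hF.dotProduct_le_of_dual_nonneg hP.1 huv hnonneg hy hyw
    linarith
  have hwP := hF.extremePoints_subset hw
  have hvZ := hP.1.isLP_of_mem_extremePoints hvP
  have hwZ := hP.1.isLP_of_mem_extremePoints hwP
  refine ⟨fun ⟨G, ⟨y, hG⟩, hvG, hwG⟩ => ?_, ?_, hvZ.add hwZ⟩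
  · exact hsep y hG.2.1 (hG.dotProduct_eq_one hvG) (hG.dotProduct_eq_one hwG)
  · refine hF.mem_iff.2 ⟨hP.add_mem hvZ hwZ hvP.1 hwP.1 hsep, ?_⟩
    rw [dotProduct_add, hF.dotProduct_eq_one hw.1, ← dotp_eq_dotProduct, hv0, zero_add]
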